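/- For all N ∈ (1,∞) and D ∈ (0,∞): π²·N²·2^{−(N−1)} ≥ D²·λ[h_{0,N,D}] ≥ (1/4)·N²·2^{−(N−1)}. -/

import Mathlib

open MeasureTheory Filter

/-- The function `s_κ` from the paper. -/
noncomputable def sKappa (κ θ : ℝ) : ℝ :=
  if 0 < κ then Real.sin (Real.sqrt κ * θ) / Real.sqrt κ
  else if κ < 0 then Real.sinh (Real.sqrt (-κ) * θ) / Real.sqrt (-κ)
  else θ

/-- The support of the measure `h · 𝓛¹`. -/
noncomputable def measSupport (h : ℝ → ℝ) : Set ℝ :=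
  {x : ℝ | ∀ ε > 0,
    0 < (MeasureTheory.volume.withDensity (fun y => ENNReal.ofReal (h y))) (Metric.ball x ε)}

/-- A one-dimensional `MCP(K,N)` density. -/
def IsMCPDensity (K N : ℝ) (h : ℝ → ℝ) : Prop :=
  (∀ x, 0 ≤ h x) ∧ MeasureTheory.LocallyIntegrable h MeasureTheory.volume ∧
  ∀ x₀ ∈ measSupport h, ∀ x₁ ∈ measSupport h,
    (0 < K → x₀ ≠ x₁ → |x₁ - x₀| < Real.pi / Real.sqrt (K / (N - 1))) ∧
    ∀ t ∈ Set.Icc (0:ℝ) 1,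
      (sKappa (K / (N - 1)) ((1 - t) * |x₁ - x₀|) / sKappa (K / (N - 1)) |x₁ - x₀|) ^ (N - 1)
          * h x₀
        ≤ h (t * x₁ + (1 - t) * x₀)

/-- The model density `h_{K,N,D}`. -/
noncomputable def modelDensity (K N D : ℝ) (x : ℝ) : ℝ :=
  if x ∈ Set.Icc 0 (D / 2) then sKappa (K / (N - 1)) (D - x) ^ (N - 1)
  else if x ∈ Set.Icc (D / 2) D then sKappa (K / (N - 1)) x ^ (N - 1)
  else 0

/-- Locally Lipschitz functions on a subset `I` of the reals. -/
def LocLipschitzOn (f : ℝ → ℝ) (I : Set ℝ) : Prop :=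
  ∀ x ∈ I, ∃ ε > 0, ∃ C : NNReal, LipschitzOnWith C f (I ∩ Metric.ball x ε)

/-- The local Lipschitz slope `|∇f|(x)` relative to `I`. -/
noncomputable def slopeOn (f : ℝ → ℝ) (I : Set ℝ) (x : ℝ) : ℝ :=
  Filter.limsup (fun y => |f y - f x| / |y - x|) (nhdsWithin x (I \ {x}))

/-- The Poincaré constant `λ[h, I]` of the density `h` on `I`. -/
noncomputable def poincareConst (h : ℝ → ℝ) (I : Set ℝ) : ℝ :=
  sInf { r : ℝ | ∃ f : ℝ → ℝ, LocLipschitzOn f I ∧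
    (∫ x in I, f x * h x) = 0 ∧
    (0 < ∫ x in I, (f x) ^ 2 * h x) ∧
    MeasureTheory.IntegrableOn (fun x => (f x) ^ 2 * h x) I ∧
    r = (∫ x in I, (slopeOn f I x) ^ 2 * h x) / (∫ x in I, (f x) ^ 2 * h x) }

/-- At a point of differentiability the local Lipschitz slope is the absolute value of the
derivative. -/
lemma slopeOn_univ_of_hasDerivAt {f : ℝ → ℝ} {f' x : ℝ} (h : HasDerivAt f f' x) :
    slopeOn f Set.univ x = |f'| := by
  have h1 := (hasDerivAt_iff_tendsto_slope.1 h).abs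
  unfold slopeOn
  rw [← Set.compl_eq_univ_sdiff]
  refine Tendsto.limsup_eq (h1.congr fun y => ?_)
  rw [slope_def_field, abs_div]

lemma LocLipschitzOn.locallyLipschitz {f : ℝ → ℝ} (hf : LocLipschitzOn f Set.univ) :
    LocallyLipschitz f := by
  intro x
  obtain ⟨ε, hε, C, hC⟩ := hf x (Set.mem_univ x)
  exact ⟨C, _, Metric.ball_mem_nhds x hε, by simpa using hC⟩

lemma LipschitzWith.locLipschitzOn {f : ℝ → ℝ} {C : NNReal} (hf : LipschitzWith C f)
    (I : Set ℝ) : LocLipschitzOn f I :=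
  fun _ _ => ⟨1, one_pos, C, hf.lipschitzOnWith⟩

lemma LocallyLipschitz.exists_lipschitzOnWith_Icc {f : ℝ → ℝ} (hf : LocallyLipschitz f)
    (a b : ℝ) : ∃ K, LipschitzOnWith K f (Set.Icc a b) :=
  hf.locallyLipschitzOn.exists_lipschitzOnWith_of_compact isCompact_Icc

lemma LocallyLipschitz.intervalIntegrable_deriv_sq {f : ℝ → ℝ} (hf : LocallyLipschitz f)
    (a b : ℝ) : IntervalIntegrable (fun x => deriv f x ^ 2) volume a b := by
  obtain ⟨K, hK⟩ := hf.exists_lipschitzOnWith_Icc (min a b - 1) (max a b + 1)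
  refine (intervalIntegrable_const (c := (K : ℝ) ^ 2)).mono_fun
    ((measurable_deriv f).pow_const 2).aestronglyMeasurable ?_
  refine (ae_restrict_mem measurableSet_uIoc).mono fun x hx => ?_
  have hx' := Set.uIoc_subset_uIcc hx
  rw [Set.uIcc, Set.mem_Icc] at hx'
  have h1 : ‖deriv f x‖ ≤ K := norm_deriv_le_of_lipschitzOn
    (Icc_mem_nhds (by linarith [hx'.1]) (by linarith [hx'.2])) hK
  simp only [norm_pow, Real.norm_of_nonneg K.coe_nonneg]
  gcongr

lemma LocallyLipschitz.ae_slopeOn_univ_eq {f : ℝ → ℝ} (hf : LocallyLipschitz f) (a b : ℝ) :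
    ∀ᵐ x, x ∈ Set.uIcc a b → slopeOn f Set.univ x = |deriv f x| := by
  obtain ⟨K, hK⟩ := hf.exists_lipschitzOnWith_Icc (min a b) (max a b)
  have hac : AbsolutelyContinuousOnInterval f a b :=
    LipschitzOnWith.absolutelyContinuousOnInterval hK
  filter_upwards [hac.ae_differentiableAt] with x hx hmem
  exact slopeOn_univ_of_hasDerivAt (hx hmem).hasDerivAt

lemma modelDensity_zero_of_le_half {N D x : ℝ} (h0 : 0 ≤ x) (hx : x ≤ D / 2) :
    modelDensity 0 N D x = (D - x) ^ (N - 1) := by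
  simp [modelDensity, sKappa, h0, hx]

lemma modelDensity_zero_of_half_le {N D x : ℝ} (hx : D / 2 ≤ x) (hx' : x ≤ D) :
    modelDensity 0 N D x = x ^ (N - 1) := by
  rcases hx.eq_or_lt with rfl | h
  · simp only [modelDensity, sKappa, Set.mem_Icc]
    split_ifs <;> simp_all
    ring_nf
  · simp [modelDensity, sKappa, h.not_ge, hx, hx']

lemma modelDensity_eq_zero {K N D x : ℝ} (hD : 0 < D) (hx : x ∉ Set.Icc 0 D) :
    modelDensity K N D x = 0 := by
  have h1 : x ∉ Set.Icc 0 (D / 2) := fun h => hx ⟨h.1, by linarith [h.2]⟩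
  have h2 : x ∉ Set.Icc (D / 2) D := fun h => hx ⟨by linarith [h.1], h.2⟩
  simp only [modelDensity, h1, h2, if_false]

lemma continuous_rpow_sub_one {N : ℝ} (hN : 1 < N) : Continuous fun x : ℝ => x ^ (N - 1) :=
  Real.continuous_rpow_const (by linarith)

lemma intervalIntegrable_mul_modelDensity {N D : ℝ} (hN : 1 < N) (hD : 0 < D) {F : ℝ → ℝ}
    (hF : IntervalIntegrable F volume 0 D) :
    IntervalIntegrable (fun x => F x * modelDensity 0 N D x) volume 0 (D / 2) ∧
      IntervalIntegrable (fun x => F x * modelDensity 0 N D x) volume (D / 2) D := by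
  have hw := continuous_rpow_sub_one hN
  have h1 : IntervalIntegrable F volume 0 (D / 2) := hF.mono_set (by
    rw [Set.uIcc_of_le (by linarith), Set.uIcc_of_le hD.le]
    exact Set.Icc_subset_Icc_right (by linarith))
  have h2 : IntervalIntegrable F volume (D / 2) D := hF.mono_set (by
    rw [Set.uIcc_of_le (by linarith), Set.uIcc_of_le hD.le]
    exact Set.Icc_subset_Icc_left (by linarith))
  constructor
  · refine (h1.mul_continuousOn (g := fun x => (D - x) ^ (N - 1))
      (by fun_prop)).congr fun x hx => ?_
    rw [Set.uIoc_of_le (by linarith)] at hx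
    simp only [modelDensity_zero_of_le_half hx.1.le hx.2]
  · refine (h2.mul_continuousOn hw.continuousOn).congr fun x hx => ?_
    rw [Set.uIoc_of_le (by linarith)] at hx
    simp only [modelDensity_zero_of_half_le hx.1.le hx.2]

lemma integrable_mul_modelDensity {N D : ℝ} (hN : 1 < N) (hD : 0 < D) {F : ℝ → ℝ}
    (hF : IntervalIntegrable F volume 0 D) :
    Integrable fun x => F x * modelDensity 0 N D x := by
  obtain ⟨h1, h2⟩ := intervalIntegrable_mul_modelDensity hN hD hF
  have h3 := (intervalIntegrable_iff_integrableOn_Icc_of_le hD.le).1 (h1.trans h2)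
  refine (integrableOn_iff_integrable_of_support_subset ?_).1 h3
  intro x hx
  by_contra h
  exact hx (by simp [modelDensity_eq_zero hD h])

/-- Integration against the model density, folded onto the right half of the interval. -/
lemma integral_mul_modelDensity {N D : ℝ} (hN : 1 < N) (hD : 0 < D) {F : ℝ → ℝ}
    (hF : IntervalIntegrable F volume 0 D) :
    ∫ x, F x * modelDensity 0 N D x =
      (∫ x in (D / 2)..D, F (D - x) * x ^ (N - 1)) + ∫ x in (D / 2)..D, F x * x ^ (N - 1) := by
  obtain ⟨h1, h2⟩ := intervalIntegrable_mul_modelDensity hN hD hF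
  have h3 : ∫ x, F x * modelDensity 0 N D x = ∫ x in 0..D, F x * modelDensity 0 N D x := by
    rw [intervalIntegral.integral_of_le hD.le, ← integral_Icc_eq_integral_Ioc]
    refine (setIntegral_eq_integral_of_forall_compl_eq_zero fun x hx => ?_).symm
    simp [modelDensity_eq_zero hD hx]
  rw [h3, ← intervalIntegral.integral_add_adjacent_intervals h1 h2]
  congr 1
  · have := intervalIntegral.integral_comp_sub_left (a := D / 2) (b := D)
      (fun x => F x * modelDensity 0 N D x) D
    rw [sub_self, show D - D / 2 = D / 2 by ring] at this
    rw [← this]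
    refine intervalIntegral.integral_congr fun x hx => ?_
    rw [Set.uIcc_of_le (by linarith)] at hx
    simp only [modelDensity_zero_of_le_half (N := N) (D := D) (x := D - x)
      (by linarith [hx.2]) (by linarith [hx.1]), sub_sub_cancel]
  · refine intervalIntegral.integral_congr fun x hx => ?_
    rw [Set.uIcc_of_le (by linarith)] at hx
    simp only [modelDensity_zero_of_half_le hx.1 hx.2]

/-- The energy of a locally Lipschitz function, in terms of its derivative. -/
lemma integral_slopeOn_sq_mul_modelDensity {N D : ℝ} (hN : 1 < N) (hD : 0 < D) {f : ℝ → ℝ}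
    (hf : LocallyLipschitz f) :
    ∫ x, slopeOn f Set.univ x ^ 2 * modelDensity 0 N D x =
      (∫ x in (D / 2)..D, deriv (fun y => f (D - y)) x ^ 2 * x ^ (N - 1)) +
        ∫ x in (D / 2)..D, deriv f x ^ 2 * x ^ (N - 1) := by
  have h1 : ∫ x, slopeOn f Set.univ x ^ 2 * modelDensity 0 N D x =
      ∫ x, deriv f x ^ 2 * modelDensity 0 N D x := by
    refine integral_congr_ae ?_
    filter_upwards [hf.ae_slopeOn_univ_eq 0 D] with x hx
    by_cases hmem : x ∈ Set.Icc 0 D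
    · rw [hx (by rwa [Set.uIcc_of_le hD.le]), sq_abs]
    · simp [modelDensity_eq_zero hD hmem]
  rw [h1, integral_mul_modelDensity hN hD (hf.intervalIntegrable_deriv_sq 0 D)]
  simp only [deriv_comp_const_sub, neg_sq]

lemma integral_rpow_sub_one {N a b : ℝ} (hN : 1 < N) :
    ∫ x in a..b, x ^ (N - 1) = (b ^ N - a ^ N) / N := by
  rw [integral_rpow (Or.inl (by linarith)), sub_add_cancel]

/-- A weighted Hardy inequality on `[D / 2, D]` with weight `x ^ (N - 1)`. -/
lemma integral_sub_sq_mul_rpow_le {N D : ℝ} (hN : 1 < N) (hD : 0 < D) {φ : ℝ → ℝ}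
    (hφ : LocallyLipschitz φ) :
    ∫ x in (D / 2)..D, (φ x - φ (D / 2)) ^ 2 * x ^ (N - 1) ≤
      2 ^ N * D ^ 2 / N ^ 2 * ∫ x in (D / 2)..D, deriv φ x ^ 2 * x ^ (N - 1) := by
  have hN0 : 0 < N := by linarith
  have hw := continuous_rpow_sub_one hN
  have hle : D / 2 ≤ D := by linarith
  set E := ∫ x in (D / 2)..D, deriv φ x ^ 2 * x ^ (N - 1) with hE
  set k : ℝ → ℝ := fun x => D ^ 2 * x ^ (-N - 1) with hk
  set W := ∫ x in (D / 2)..D, k x with hWdef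
  have hDN : (D / 2) ^ N = D ^ N / 2 ^ N := Real.div_rpow hD.le (by norm_num) _
  have hDN0 : 0 < D ^ N := Real.rpow_pos_of_pos hD _
  have h2N : (1 : ℝ) < 2 ^ N := Real.one_lt_rpow (by norm_num) hN0
  have hW : W = D ^ 2 / D ^ N * (2 ^ N - 1) / N := by
    rw [hWdef, hk, intervalIntegral.integral_const_mul, integral_rpow, sub_add_cancel,
      Real.rpow_neg hD.le, Real.rpow_neg (by linarith), hDN]
    · field_simp
      ring
    · refine Or.inr ⟨by linarith, ?_⟩
      rw [Set.uIcc_of_le hle]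
      intro h
      linarith [h.1]
  have hWpos : 0 < W := by
    rw [hW]
    have : 0 < (2 : ℝ) ^ N - 1 := by linarith
    positivity
  have hkint : IntervalIntegrable k volume (D / 2) D := by
    refine ContinuousOn.intervalIntegrable fun x hx => ?_
    rw [Set.uIcc_of_le hle] at hx
    have : x ≠ 0 := by linarith [hx.1]
    exact (continuousAt_const.mul
      (Real.continuousAt_rpow_const _ _ (Or.inl this))).continuousWithinAt
  have hEint : IntervalIntegrable (fun x => deriv φ x ^ 2 * x ^ (N - 1)) volume (D / 2) D :=
    (hφ.intervalIntegrable_deriv_sq _ _).mul_continuousOn hw.continuousOn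
  have hpt : ∀ t ∈ Set.Icc (D / 2) D, (φ t - φ (D / 2)) ^ 2 ≤ E * W := by
    intro t ht
    set s := (φ t - φ (D / 2)) / W with hs
    have hsub : Set.uIcc (D / 2) t ⊆ Set.uIcc (D / 2) D := by
      rw [Set.uIcc_of_le ht.1, Set.uIcc_of_le hle]
      exact Set.Icc_subset_Icc_right ht.2
    obtain ⟨K, hK⟩ := hφ.exists_lipschitzOnWith_Icc (min (D / 2) t) (max (D / 2) t)
    have hac : AbsolutelyContinuousOnInterval φ (D / 2) t :=
      LipschitzOnWith.absolutelyContinuousOnInterval hK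
    have hftc := hac.integral_deriv_eq_sub
    have hmono : ∫ x in (D / 2)..t, 2 * s * deriv φ x ≤
        ∫ x in (D / 2)..t, (deriv φ x ^ 2 * x ^ (N - 1) + s ^ 2 * k x) := by
      refine intervalIntegral.integral_mono_on ht.1 (hac.intervalIntegrable_deriv.const_mul _)
        ((hEint.mono_set hsub).add ((hkint.mono_set hsub).const_mul _)) fun x hx => ?_
      have hx0 : 0 < x := by linarith [hx.1]
      have hwx : 0 < x ^ (N - 1) := Real.rpow_pos_of_pos hx0 _
      have hprod : 1 ≤ x ^ (N - 1) * k x := by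
        rw [hk, mul_left_comm, ← Real.rpow_add hx0,
          show N - 1 + (-N - 1) = -(2 : ℝ) by ring, Real.rpow_neg hx0.le, Real.rpow_two,
          ← div_eq_mul_inv, one_le_div (by positivity)]
        have : x ≤ D := hx.2.trans ht.2
        gcongr
      have h1 : 0 ≤ (deriv φ x * x ^ (N - 1) - s) ^ 2 := sq_nonneg _
      have h2 : 0 ≤ x ^ (N - 1) *
          (deriv φ x ^ 2 * x ^ (N - 1) + s ^ 2 * k x - 2 * s * deriv φ x) := by
        nlinarith [mul_nonneg (sq_nonneg s) (sub_nonneg.2 hprod)]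
      linarith [nonneg_of_mul_nonneg_right h2 hwx]
    rw [intervalIntegral.integral_const_mul, hftc, intervalIntegral.integral_add
      (hEint.mono_set hsub) ((hkint.mono_set hsub).const_mul _),
      intervalIntegral.integral_const_mul] at hmono
    have hEt : ∫ x in (D / 2)..t, deriv φ x ^ 2 * x ^ (N - 1) ≤ E :=
      intervalIntegral.integral_mono_interval le_rfl ht.1 ht.2
        ((ae_restrict_mem measurableSet_Ioc).mono fun x hx => by
          have : 0 < x := by linarith [hx.1]
          simp only [Pi.zero_apply]
          positivity) hEint
    have hWt : ∫ x in (D / 2)..t, k x ≤ W :=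
      intervalIntegral.integral_mono_interval le_rfl ht.1 ht.2
        ((ae_restrict_mem measurableSet_Ioc).mono fun x hx => by
          have : 0 < x := by linarith [hx.1]
          simp only [Pi.zero_apply, hk]
          positivity) hkint
    have h3 : s ^ 2 * ∫ x in (D / 2)..t, k x ≤ s ^ 2 * W := by gcongr
    have hsW : φ t - φ (D / 2) = s * W := by rw [hs, div_mul_cancel₀ _ hWpos.ne']
    rw [hsW] at hmono ⊢
    have h4 : s ^ 2 * W ≤ E := by nlinarith
    nlinarith
  have hEnn : 0 ≤ E := intervalIntegral.integral_nonneg hle fun x hx => by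
    have : 0 < x := by linarith [hx.1]
    positivity
  calc ∫ x in (D / 2)..D, (φ x - φ (D / 2)) ^ 2 * x ^ (N - 1)
      ≤ ∫ x in (D / 2)..D, E * W * x ^ (N - 1) := by
        have hc := hφ.continuous
        refine intervalIntegral.integral_mono_on hle
          (Continuous.intervalIntegrable (by fun_prop) _ _)
          (Continuous.intervalIntegrable (by fun_prop) _ _) fun x hx => ?_
        have hx0 : 0 < x := by linarith [hx.1]
        exact mul_le_mul_of_nonneg_right (hpt x hx) (by positivity)
    _ = E * (W * ((D ^ N - (D / 2) ^ N) / N)) := by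
        rw [intervalIntegral.integral_const_mul, integral_rpow_sub_one hN, mul_assoc]
    _ ≤ E * (2 ^ N * D ^ 2 / N ^ 2) := by
        refine mul_le_mul_of_nonneg_left ?_ hEnn
        have h5 : W * ((D ^ N - (D / 2) ^ N) / N) =
            D ^ 2 / N ^ 2 * ((2 ^ N - 1) * (1 - 1 / 2 ^ N)) := by
          rw [hW, hDN]
          field_simp
        rw [h5, mul_comm (2 ^ N) (D ^ 2), mul_div_right_comm]
        refine mul_le_mul_of_nonneg_left ?_ (by positivity)
        have h6 : (0 : ℝ) < 1 / 2 ^ N := by positivity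
        nlinarith
    _ = _ := mul_comm _ _

/-- Poincaré inequality for the model density. -/
lemma integral_sq_mul_modelDensity_le {N D : ℝ} (hN : 1 < N) (hD : 0 < D) {f : ℝ → ℝ}
    (hf : LocallyLipschitz f) (hmean : ∫ x, f x * modelDensity 0 N D x = 0) :
    ∫ x, f x ^ 2 * modelDensity 0 N D x ≤
      2 ^ N * D ^ 2 / N ^ 2 * ∫ x, slopeOn f Set.univ x ^ 2 * modelDensity 0 N D x := by
  have hc := hf.continuous
  set c := f (D / 2) with hcdef
  have hle : D / 2 ≤ D := by linarith
  have hFint : ∀ F : ℝ → ℝ, Continuous F → IntervalIntegrable F volume 0 D :=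
    fun F hF => hF.intervalIntegrable _ _
  have hh : 0 ≤ ∫ x, (1 : ℝ) * modelDensity 0 N D x := by
    rw [integral_mul_modelDensity hN hD (hFint _ continuous_const)]
    have : 0 ≤ ∫ x in (D / 2)..D, (1 : ℝ) * x ^ (N - 1) :=
      intervalIntegral.integral_nonneg hle fun x hx => by
        have : 0 < x := by linarith [hx.1]
        positivity
    linarith
  have hexp : ∫ x, (f x - c) ^ 2 * modelDensity 0 N D x =
      (∫ x, f x ^ 2 * modelDensity 0 N D x) + c ^ 2 * ∫ x, (1 : ℝ) * modelDensity 0 N D x := by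
    have i1 := integrable_mul_modelDensity hN hD (hFint (fun x => f x ^ 2) (by fun_prop))
    have i2 := integrable_mul_modelDensity hN hD (hFint f hc)
    have i3 := integrable_mul_modelDensity hN hD (hFint (fun _ => 1) continuous_const)
    have h1 : ∀ x, (f x - c) ^ 2 * modelDensity 0 N D x =
        f x ^ 2 * modelDensity 0 N D x - 2 * c * (f x * modelDensity 0 N D x) +
          c ^ 2 * (1 * modelDensity 0 N D x) := fun x => by ring
    simp only [h1]
    have i4 := i1.sub (i2.const_mul (2 * c))
    rw [integral_add (by exact i4) (i3.const_mul _), integral_sub i1 (i2.const_mul _),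
      integral_const_mul, integral_const_mul, hmean]
    ring
  have hsplit := integral_mul_modelDensity hN hD
    (hFint (fun x => (f x - c) ^ 2) (by fun_prop))
  have hrefl : LocallyLipschitz fun x => f (D - x) := by
    refine hf.comp (LipschitzWith.locallyLipschitz (K := 1) ?_)
    exact LipschitzWith.of_dist_le_mul fun x y => by
      simp only [NNReal.coe_one, one_mul, dist_sub_left, le_refl]
  have e1 := integral_sub_sq_mul_rpow_le hN hD hf
  have e2 := integral_sub_sq_mul_rpow_le hN hD hrefl
  rw [show D - D / 2 = D / 2 by ring] at e2
  rw [integral_slopeOn_sq_mul_modelDensity hN hD hf, mul_add]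
  simp only [← hcdef] at e1 e2
  nlinarith [mul_nonneg (sq_nonneg c) hh]

/-- The elementary inequality controlling the masses in the upper bound. -/
lemma one_add_inv_rpow_mul_le {N : ℝ} (hN : 1 < N) :
    (1 + 1 / N) ^ N * (1 + 2 ^ (-(N - 1))) + 2 ^ (-(N - 1)) ≤ (5 : ℝ) := by
  have hN0 : 0 < N := by linarith
  rcases le_total 2 N with h2 | h2
  · have hE : (1 + 1 / N) ^ N ≤ 3 := by
      calc (1 + 1 / N) ^ N ≤ Real.exp (1 / N) ^ N := by
            gcongr
            linarith [Real.add_one_le_exp (1 / N)]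
        _ = Real.exp 1 := by rw [← Real.exp_mul]; field_simp
        _ ≤ 3 := by linarith [Real.exp_one_lt_d9]
    have hy : (2 : ℝ) ^ (-(N - 1)) ≤ 1 / 2 := by
      calc (2 : ℝ) ^ (-(N - 1)) ≤ 2 ^ (-1 : ℝ) := by
            apply Real.rpow_le_rpow_of_exponent_le <;> linarith
        _ = 1 / 2 := by rw [Real.rpow_neg_one]; norm_num
    have hy0 : (0 : ℝ) < 2 ^ (-(N - 1)) := by positivity
    nlinarith
  · set x := N - 1 with hx
    have hx0 : 0 ≤ x := by linarith
    have hx1 : x ≤ 1 := by linarith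
    set z := Real.exp (-(1 / 2)) with hz
    have hz0 : 0 < z := Real.exp_pos _
    have hz1 : z ≤ 3 / 4 := by
      have h1 : z * Real.exp (1 / 2) = 1 := by rw [hz, ← Real.exp_add]; simp
      nlinarith [Real.add_one_le_exp (1 / 2 : ℝ)]
    have bern : ∀ c : ℝ, 0 ≤ c → c ^ x ≤ 1 + x * (c - 1) := fun c hc => by
      have := rpow_one_add_le_one_add_mul_self (s := c - 1) (by linarith) hx0 hx1
      rwa [add_sub_cancel] at this
    have b1 := bern (2 * z) (by positivity)
    have b2 := bern z hz0.le
    have b3 := bern (1 / 2) (by norm_num)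
    have hy : (2 : ℝ) ^ (-x) = (1 / 2) ^ x := by
      rw [Real.rpow_neg (by norm_num), one_div, Real.inv_rpow (by norm_num)]
    have hE : (1 + 1 / N) ^ N ≤ 2 * (2 * z) ^ x := by
      calc (1 + 1 / N) ^ N ≤ (2 * Real.exp (-(x / (2 * N)))) ^ N := by
            gcongr
            have h1 : 1 + 1 / N = 2 * (-(x / (2 * N)) + 1) := by
              rw [hx]; field_simp; ring
            rw [h1]
            gcongr
            exact Real.add_one_le_exp _
        _ = 2 * (2 * z) ^ x := by
            rw [Real.mul_rpow (by norm_num) (Real.exp_pos _).le, ← Real.exp_mul,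
              Real.mul_rpow (by norm_num) hz0.le, hz, ← Real.exp_mul,
              show N = 1 + x by rw [hx]; ring, Real.rpow_add (by norm_num), Real.rpow_one]
            have h3 : 1 + x ≠ 0 := by linarith
            rw [mul_assoc]
            congr 3
            field_simp
    have hprod : (2 * z) ^ x * (1 / 2) ^ x = z ^ x := by
      rw [← Real.mul_rpow (by positivity) (by norm_num)]
      congr 1
      ring
    rw [hy]
    have hp0 : (0 : ℝ) < (1 / 2) ^ x := by positivity
    have h4 : (1 + 1 / N) ^ N * (1 + (1 / 2) ^ x) ≤ 2 * (2 * z) ^ x * (1 + (1 / 2) ^ x) := by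
      gcongr
    nlinarith [mul_nonneg hx0 (sub_nonneg.2 hz1)]

/-- The test function for the upper bound: a sine profile around the midpoint, cut off at its
first extrema. -/
noncomputable def cutoffSine (N D x : ℝ) : ℝ :=
  Real.sin (N * Real.pi * max (-(1 / (2 * N))) (min (1 / (2 * N)) (x / D - 1 / 2)))

lemma exists_lipschitzWith_cutoffSine (N D : ℝ) : ∃ C, LipschitzWith C (cutoffSine N D) := by
  have h1 : LipschitzWith (Real.nnabs D⁻¹) fun x : ℝ => x / D - 1 / 2 :=
    LipschitzWith.of_dist_le_mul fun x y => by
      rw [Real.dist_eq, Real.dist_eq, Real.coe_nnabs, ← abs_mul]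
      exact le_of_eq (by ring_nf)
  have h2 : LipschitzWith (Real.nnabs (N * Real.pi)) fun x : ℝ => N * Real.pi * x :=
    LipschitzWith.of_dist_le_mul fun x y => by
      rw [Real.dist_eq, Real.dist_eq, Real.coe_nnabs, ← abs_mul]
      exact le_of_eq (by ring_nf)
  exact ⟨_, Real.lipschitzWith_sin.comp
    (h2.comp ((h1.const_min (1 / (2 * N))).const_max (-(1 / (2 * N)))))⟩

lemma cutoffSine_reflect {N D : ℝ} (hN : 1 < N) (hD : 0 < D) (x : ℝ) :
    cutoffSine N D (D - x) = -cutoffSine N D x := by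
  have hN0 : 0 < N := by linarith
  have hk : 0 < 1 / (2 * N) := by positivity
  have h1 : (D - x) / D - 1 / 2 = -(x / D - 1 / 2) := by field_simp; ring
  unfold cutoffSine
  rw [h1, ← Real.sin_neg, ← mul_neg]
  congr 2
  grind

lemma cutoffSine_of_le {N D x : ℝ} (hN : 1 < N) (hD : 0 < D) (h1 : D / 2 ≤ x)
    (h2 : x ≤ D / 2 + D / (2 * N)) :
    cutoffSine N D x = Real.sin (N * Real.pi * (x / D - 1 / 2)) := by
  have hN0 : 0 < N := by linarith
  have hk : 0 < 1 / (2 * N) := by positivity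
  have e1 : 0 ≤ x / D - 1 / 2 := by
    rw [sub_nonneg, le_div_iff₀ hD]; linarith
  have e2 : x / D - 1 / 2 ≤ 1 / (2 * N) := by
    rw [sub_le_iff_le_add, div_le_iff₀ hD]
    calc x ≤ D / 2 + D / (2 * N) := h2
      _ = _ := by ring
  rw [cutoffSine, min_eq_right e2, max_eq_right (by linarith)]

lemma cutoffSine_of_ge {N D x : ℝ} (hN : 1 < N) (hD : 0 < D)
    (h : D / 2 + D / (2 * N) ≤ x) : cutoffSine N D x = 1 := by
  have hN0 : 0 < N := by linarith
  have hk : 0 < 1 / (2 * N) := by positivity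
  have e2 : 1 / (2 * N) ≤ x / D - 1 / 2 := by
    rw [le_sub_iff_add_le, le_div_iff₀ hD]
    calc _ = D / 2 + D / (2 * N) := by ring
      _ ≤ x := h
  rw [cutoffSine, min_eq_left e2, max_eq_right (by linarith)]
  convert Real.sin_pi_div_two using 2
  field_simp

lemma deriv_cutoffSine_of_lt {N D x : ℝ} (hN : 1 < N) (hD : 0 < D) (h1 : D / 2 < x)
    (h2 : x < D / 2 + D / (2 * N)) :
    deriv (cutoffSine N D) x =
      N * Real.pi / D * Real.cos (N * Real.pi * (x / D - 1 / 2)) := by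
  have h3 : cutoffSine N D =ᶠ[nhds x] fun y => Real.sin (N * Real.pi * (y / D - 1 / 2)) := by
    filter_upwards [Ioo_mem_nhds h1 h2] with y hy
    exact cutoffSine_of_le hN hD hy.1.le hy.2.le
  rw [h3.deriv_eq]
  have h4 : HasDerivAt (fun y : ℝ => N * Real.pi * (y / D - 1 / 2)) (N * Real.pi * (1 / D)) x :=
    (((hasDerivAt_id x).div_const D).sub_const (1 / 2)).const_mul _
  rw [h4.sin.deriv]
  ring

lemma deriv_cutoffSine_of_gt {N D x : ℝ} (hN : 1 < N) (hD : 0 < D)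
    (h : D / 2 + D / (2 * N) < x) : deriv (cutoffSine N D) x = 0 := by
  have h3 : cutoffSine N D =ᶠ[nhds x] fun _ => 1 := by
    filter_upwards [Ioi_mem_nhds h] with y hy
    exact cutoffSine_of_ge hN hD (le_of_lt hy)
  rw [h3.deriv_eq, deriv_const]

/-- A Chebyshev-type inequality: a half period of the cosine against an increasing weight. -/
lemma integral_cos_mul_rpow_nonpos {N D : ℝ} (hN : 1 < N) (hD : 0 < D) :
    ∫ x in (D / 2)..(D / 2 + D / (2 * N)),
      Real.cos (2 * (N * Real.pi * (x / D - 1 / 2))) * x ^ (N - 1) ≤ 0 := by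
  have hN0 : 0 < N := by linarith
  have hpi := Real.pi_pos
  have hw := continuous_rpow_sub_one hN
  have hstep : 0 < D / (2 * N) := by positivity
  set m := D / 2 + D / (4 * N) with hm
  have hm0 : 0 < m := by positivity
  have h0 : ∫ x in (D / 2)..(D / 2 + D / (2 * N)),
      Real.cos (2 * (N * Real.pi * (x / D - 1 / 2))) = 0 := by
    have h1 : ∀ x : ℝ, 2 * (N * Real.pi * (x / D - 1 / 2)) =
        2 * N * Real.pi / D * x - N * Real.pi := fun x => by field_simp
    simp only [h1]
    rw [intervalIntegral.integral_comp_mul_sub Real.cos (by positivity), integral_cos,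
      show 2 * N * Real.pi / D * (D / 2 + D / (2 * N)) - N * Real.pi = Real.pi by
        field_simp; ring,
      show 2 * N * Real.pi / D * (D / 2) - N * Real.pi = 0 by field_simp; ring]
    simp
  calc _ ≤ ∫ x in (D / 2)..(D / 2 + D / (2 * N)),
        Real.cos (2 * (N * Real.pi * (x / D - 1 / 2))) * m ^ (N - 1) := by
        refine intervalIntegral.integral_mono_on (by linarith)
          (Continuous.intervalIntegrable (by fun_prop) _ _)
          (Continuous.intervalIntegrable (by fun_prop) _ _) fun x hx => ?_
        have hx0 : 0 < x := by linarith [hx.1]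
        have hθ : 2 * (N * Real.pi * (x / D - 1 / 2)) =
            Real.pi / 2 + 2 * N * Real.pi / D * (x - m) := by
          rw [hm]; field_simp; ring
        have hθ0 : 0 ≤ 2 * (N * Real.pi * (x / D - 1 / 2)) := by
          have : 0 ≤ x / D - 1 / 2 := by
            rw [sub_nonneg, le_div_iff₀ hD]; linarith [hx.1]
          positivity
        have hθ1 : 2 * (N * Real.pi * (x / D - 1 / 2)) ≤ Real.pi := by
          have : x / D - 1 / 2 ≤ 1 / (2 * N) := by
            rw [sub_le_iff_le_add, div_le_iff₀ hD]
            calc x ≤ D / 2 + D / (2 * N) := hx.2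
              _ = _ := by ring
          calc _ ≤ 2 * (N * Real.pi * (1 / (2 * N))) := by gcongr
            _ = Real.pi := by field_simp
        have hc0 : 0 < 2 * N * Real.pi / D := by positivity
        rcases le_total x m with hxm | hxm
        · refine mul_le_mul_of_nonneg_left
            (Real.rpow_le_rpow hx0.le hxm (by linarith)) ?_
          refine Real.cos_nonneg_of_neg_pi_div_two_le_of_le (by linarith) ?_
          rw [hθ]
          nlinarith [mul_nonneg hc0.le (sub_nonneg.2 hxm)]
        · refine mul_le_mul_of_nonpos_left
            (Real.rpow_le_rpow hm0.le hxm (by linarith)) ?_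
          refine Real.cos_nonpos_of_pi_div_two_le_of_le ?_ (by linarith)
          rw [hθ]
          nlinarith [mul_nonneg hc0.le (sub_nonneg.2 hxm)]
    _ = 0 := by rw [intervalIntegral.integral_mul_const, h0, zero_mul]

/-- The weighted mass of the region where the test function varies is controlled by the total
mass. -/
lemma integral_rpow_near_half_le {N D : ℝ} (hN : 1 < N) (hD : 0 < D) :
    ∫ x in (D / 2)..(D / 2 + D / (2 * N)), x ^ (N - 1) ≤
      2 ^ (-(N - 1)) * ((∫ x in (D / 2)..(D / 2 + D / (2 * N)), x ^ (N - 1)) +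
        2 * ∫ x in (D / 2 + D / (2 * N))..D, x ^ (N - 1)) := by
  have hN0 : 0 < N := by linarith
  have hDN : 0 < D ^ N := by positivity
  have hy : (2 : ℝ) ^ (-(N - 1)) = 2 * 2 ^ (-N) := by
    rw [show -(N - 1) = 1 + -N by ring, Real.rpow_add (by norm_num), Real.rpow_one]
  have hhalf : (D / 2) ^ N = D ^ N * 2 ^ (-N) := by
    rw [Real.div_rpow hD.le (by norm_num), Real.rpow_neg (by norm_num), div_eq_mul_inv]
  have hb : (D / 2 + D / (2 * N)) ^ N = D ^ N * 2 ^ (-N) * (1 + 1 / N) ^ N := by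
    rw [← hhalf, ← Real.mul_rpow (by positivity) (by positivity)]
    congr 1
    field_simp
  have key := one_add_inv_rpow_mul_le hN
  rw [hy] at key
  rw [integral_rpow_sub_one hN, integral_rpow_sub_one hN, hb, hhalf, hy]
  set q : ℝ := 2 ^ (-N)
  set E := (1 + 1 / N) ^ N
  have hq : 0 < q := by positivity
  have h1 : 0 ≤ D ^ N * q / N * (5 - (E * (1 + 2 * q) + 2 * q)) :=
    mul_nonneg (by positivity) (by linarith)
  have h2 : 2 * q * ((D ^ N * q * E - D ^ N * q) / N + 2 * ((D ^ N - D ^ N * q * E) / N)) -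
      (D ^ N * q * E - D ^ N * q) / N = D ^ N * q / N * (5 - (E * (1 + 2 * q) + 2 * q)) := by
    ring
  linarith

/-- The test function is admissible, and its Rayleigh quotient satisfies the upper bound. -/
lemma cutoffSine_rayleigh {N D : ℝ} (hN : 1 < N) (hD : 0 < D) :
    (∫ x, cutoffSine N D x * modelDensity 0 N D x) = 0 ∧
    (0 < ∫ x, cutoffSine N D x ^ 2 * modelDensity 0 N D x) ∧
    D ^ 2 * ∫ x, slopeOn (cutoffSine N D) Set.univ x ^ 2 * modelDensity 0 N D x ≤
      Real.pi ^ 2 * N ^ 2 * 2 ^ (-(N - 1)) *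
        ∫ x, cutoffSine N D x ^ 2 * modelDensity 0 N D x := by
  have hN0 : 0 < N := by linarith
  have hw := continuous_rpow_sub_one hN
  obtain ⟨C, hC⟩ := exists_lipschitzWith_cutoffSine N D
  have hf := hC.locallyLipschitz
  have hc := hC.continuous
  set f := cutoffSine N D with hfdef
  have hb1 : D / 2 ≤ D / 2 + D / (2 * N) := by
    have : 0 < D / (2 * N) := by positivity
    linarith
  have hb2 : D / 2 + D / (2 * N) ≤ D := by
    have : D / (2 * N) ≤ D / 2 := by gcongr; linarith
    linarith
  set θ : ℝ → ℝ := fun x => N * Real.pi * (x / D - 1 / 2) with hθ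
  have hθc : Continuous θ := by fun_prop
  have hJ := integral_cos_mul_rpow_nonpos hN hD
  have hAB := integral_rpow_near_half_le hN hD
  set b := D / 2 + D / (2 * N) with hb
  set A := ∫ x in (D / 2)..b, x ^ (N - 1) with hA
  set B := ∫ x in b..D, x ^ (N - 1) with hB
  set J := ∫ x in (D / 2)..b, Real.cos (2 * (N * Real.pi * (x / D - 1 / 2))) * x ^ (N - 1)
    with hJdef
  have hrefl : ∀ x, f (D - x) = -f x := cutoffSine_reflect hN hD
  have hApos : 0 < A := by
    refine intervalIntegral.intervalIntegral_pos_of_pos_on (hw.intervalIntegrable _ _)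
      (fun x hx => Real.rpow_pos_of_pos (by linarith [hx.1]) _) ?_
    have : 0 < D / (2 * N) := by positivity
    linarith
  have hBnn : 0 ≤ B := intervalIntegral.integral_nonneg hb2 fun x hx => by
    have : 0 < x := by linarith [hx.1]
    positivity
  have hsin : ∫ x in (D / 2)..D, f x ^ 2 * x ^ (N - 1) = A / 2 - J / 2 + B := by
    rw [← intervalIntegral.integral_add_adjacent_intervals (b := b)
      (Continuous.intervalIntegrable (by fun_prop) _ _)
      (Continuous.intervalIntegrable (by fun_prop) _ _)]
    congr 1
    · rw [hA, hJdef, ← intervalIntegral.integral_div, ← intervalIntegral.integral_div,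
        ← intervalIntegral.integral_sub (Continuous.intervalIntegrable (by fun_prop) _ _)
          (Continuous.intervalIntegrable (by fun_prop) _ _)]
      refine intervalIntegral.integral_congr_Ioo_of_le hb1 fun x hx => ?_
      simp only [hfdef, cutoffSine_of_le hN hD hx.1.le hx.2.le, Real.sin_sq, Real.cos_sq]
      ring
    · refine intervalIntegral.integral_congr_Ioo_of_le hb2 fun x hx => ?_
      simp only [hfdef, cutoffSine_of_ge hN hD hx.1.le]
      ring
  have hcos : ∫ x in (D / 2)..D, deriv f x ^ 2 * x ^ (N - 1) =
      (N * Real.pi / D) ^ 2 * (A / 2 + J / 2) := by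
    have hFint : ∀ s t, IntervalIntegrable (fun x => deriv f x ^ 2 * x ^ (N - 1)) volume s t :=
      fun s t => (hf.intervalIntegrable_deriv_sq s t).mul_continuousOn hw.continuousOn
    rw [← intervalIntegral.integral_add_adjacent_intervals (hFint _ b) (hFint b _)]
    have h1 : ∫ x in b..D, deriv f x ^ 2 * x ^ (N - 1) = 0 := by
      rw [intervalIntegral.integral_congr_Ioo_of_le (g := fun _ => 0) hb2 fun x hx => by
        simp [hfdef, deriv_cutoffSine_of_gt hN hD hx.1]]
      simp
    rw [h1, add_zero, hA, hJdef, ← intervalIntegral.integral_div,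
      ← intervalIntegral.integral_div,
      ← intervalIntegral.integral_add (Continuous.intervalIntegrable (by fun_prop) _ _)
        (Continuous.intervalIntegrable (by fun_prop) _ _),
      ← intervalIntegral.integral_const_mul]
    refine intervalIntegral.integral_congr_Ioo_of_le hb1 fun x hx => ?_
    simp only [hfdef, deriv_cutoffSine_of_lt hN hD hx.1 hx.2, mul_pow, Real.cos_sq]
    ring
  have hV : ∫ x, f x ^ 2 * modelDensity 0 N D x = 2 * (A / 2 - J / 2 + B) := by
    rw [integral_mul_modelDensity hN hD (Continuous.intervalIntegrable (by fun_prop) _ _)]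
    simp only [hrefl, neg_sq]
    rw [hsin]
    ring
  refine ⟨?_, ?_, ?_⟩
  · rw [integral_mul_modelDensity hN hD (hc.intervalIntegrable _ _)]
    simp only [hrefl, neg_mul, intervalIntegral.integral_neg]
    ring
  · rw [hV]
    linarith
  · rw [hV, integral_slopeOn_sq_mul_modelDensity hN hD hf]
    simp only [hrefl, deriv.fun_neg, neg_sq]
    rw [hcos]
    have hq : (0 : ℝ) < 2 ^ (-(N - 1)) := by positivity
    have h1 : A / 2 + J / 2 ≤ 2 ^ (-(N - 1)) * (A / 2 - J / 2 + B) := by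
      nlinarith [mul_nonneg hq.le (neg_nonneg.2 hJ)]
    calc _ = 2 * (Real.pi ^ 2 * N ^ 2) * (A / 2 + J / 2) := by field_simp; ring
      _ ≤ 2 * (Real.pi ^ 2 * N ^ 2) * (2 ^ (-(N - 1)) * (A / 2 - J / 2 + B)) := by gcongr
      _ = _ := by ring

/-- Two-sided estimate for `λ[h_{0,N,D}]` (Lemma 5.2). -/
theorem stmt_12 (N D : ℝ) (hN : 1 < N) (hD : 0 < D) :
    Real.pi ^ 2 * N ^ 2 * (2:ℝ) ^ (-(N - 1))
        ≥ D ^ 2 * poincareConst (modelDensity 0 N D) Set.univ ∧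
    D ^ 2 * poincareConst (modelDensity 0 N D) Set.univ
        ≥ (1 / 4) * N ^ 2 * (2:ℝ) ^ (-(N - 1)) := by
  have hN0 : 0 < N := by linarith
  have hpow : (2 : ℝ) ^ (-(N - 1)) = 2 / 2 ^ N := by
    rw [neg_sub, Real.rpow_sub (by norm_num), Real.rpow_one]
  obtain ⟨C, hC⟩ := exists_lipschitzWith_cutoffSine N D
  have hc := hC.continuous
  obtain ⟨h0, hpos, hle⟩ := cutoffSine_rayleigh hN hD
  have hmem : (∫ x in Set.univ, slopeOn (cutoffSine N D) Set.univ x ^ 2 * modelDensity 0 N D x) /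
      (∫ x in Set.univ, cutoffSine N D x ^ 2 * modelDensity 0 N D x) ∈
      { r : ℝ | ∃ f : ℝ → ℝ, LocLipschitzOn f Set.univ ∧
        (∫ x in Set.univ, f x * modelDensity 0 N D x) = 0 ∧
        (0 < ∫ x in Set.univ, (f x) ^ 2 * modelDensity 0 N D x) ∧
        IntegrableOn (fun x => (f x) ^ 2 * modelDensity 0 N D x) Set.univ ∧
        r = (∫ x in Set.univ, (slopeOn f Set.univ x) ^ 2 * modelDensity 0 N D x) /
          (∫ x in Set.univ, (f x) ^ 2 * modelDensity 0 N D x) } := by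
    refine ⟨cutoffSine N D, hC.locLipschitzOn _, by simpa using h0, by simpa using hpos, ?_, rfl⟩
    exact (integrable_mul_modelDensity hN hD
      (Continuous.intervalIntegrable (by fun_prop) _ _)).integrableOn
  have hlow : ∀ r ∈ { r : ℝ | ∃ f : ℝ → ℝ, LocLipschitzOn f Set.univ ∧
        (∫ x in Set.univ, f x * modelDensity 0 N D x) = 0 ∧
        (0 < ∫ x in Set.univ, (f x) ^ 2 * modelDensity 0 N D x) ∧
        IntegrableOn (fun x => (f x) ^ 2 * modelDensity 0 N D x) Set.univ ∧
        r = (∫ x in Set.univ, (slopeOn f Set.univ x) ^ 2 * modelDensity 0 N D x) /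
          (∫ x in Set.univ, (f x) ^ 2 * modelDensity 0 N D x) },
      N ^ 2 / (2 ^ N * D ^ 2) ≤ r := by
    rintro r ⟨f, hf, hmean, hV, -, rfl⟩
    simp only [setIntegral_univ] at hmean hV ⊢
    have h := integral_sq_mul_modelDensity_le hN hD hf.locallyLipschitz hmean
    rw [le_div_iff₀ hV]
    calc _ ≤ N ^ 2 / (2 ^ N * D ^ 2) * (2 ^ N * D ^ 2 / N ^ 2 *
          ∫ x, slopeOn f Set.univ x ^ 2 * modelDensity 0 N D x) := by gcongr
      _ = _ := by field_simp
  constructor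
  · have h1 : poincareConst (modelDensity 0 N D) Set.univ ≤ _ := csInf_le ⟨_, hlow⟩ hmem
    simp only [setIntegral_univ] at h1
    calc _ ≤ D ^ 2 * ((∫ x, slopeOn (cutoffSine N D) Set.univ x ^ 2 * modelDensity 0 N D x) /
          ∫ x, cutoffSine N D x ^ 2 * modelDensity 0 N D x) := by gcongr
      _ ≤ _ := by rwa [← mul_div_assoc, div_le_iff₀ hpos]
  · have h1 : N ^ 2 / (2 ^ N * D ^ 2) ≤ poincareConst (modelDensity 0 N D) Set.univ :=
      le_csInf ⟨_, hmem⟩ hlow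
    calc _ = 1 / 2 * (D ^ 2 * (N ^ 2 / (2 ^ N * D ^ 2))) := by rw [hpow]; field_simp; ring
      _ ≤ D ^ 2 * (N ^ 2 / (2 ^ N * D ^ 2)) := by
        have : 0 ≤ D ^ 2 * (N ^ 2 / (2 ^ N * D ^ 2)) := by positivity
        linarith
      _ ≤ _ := by gcongr
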